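/- If F is a holomorphic function on the upper half plane ℂ⁺ = {ζ : Im ζ > 0} and Im F(ζ) ≥ 0 on ℂ⁺, then there exist a real constant a ≥ 0, a real constant b, and a positive Borel measure μ on ℝ with ∫ dμ(t)/(1+t²) < ∞ such that F(ζ) = aζ + b + (1/π) ∫ ( -1/(ζ-t) - t/(1+t²) ) dμ(t) for all ζ ∈ ℂ⁺. -/

import Mathlib

open MeasureTheory Complex

/-!
The representation is first proved on the unit disc. For `g` holomorphic on the disc with
`0 ≤ Re g`, the Schwarz formula (`schwarz_disc`) writes each dilation `z ↦ g (r z)`, `r < 1`, as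
`I * Im (g 0) + ∫ (e + w) / (e - w) dν_r(e)` with the positive measure
`ν_r = (2π)⁻¹ Re g (r e) |de|` on the unit circle (`exists_measure_of_diffContOnCl`). All `ν_r` have
mass `Re (g 0)`, so by weak compactness of bounded sets of measures on the compact circle they
accumulate at a measure `ν` as `r → 1`, and `ν` represents `g` because the kernel is continuous on
the circle (`herglotz_disc`).

The half-plane case is this result for `g w = -I * F (I * (1 + w) / (1 - w))`. Under the Cayley
transform the point `e = 1` goes to infinity and its mass `ν {1}` becomes the coefficient `a` of the
linear term. For `e ≠ 1`, with `t` the image of `e`, the kernel satisfies (`I_mul_kernel`)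
`I * (e + w) / (e - w) = (1 + t ζ) / (t - ζ) = (1 + t²) (-1 / (ζ - t) - t / (1 + t²))`,
so `μ` is `π (1 + t²)` times the image of the restriction of `ν` to the complement of `1`.
-/

/-- **Schwarz integral formula**: a holomorphic function on the unit disc is recovered, up to an
imaginary constant, from its real part on the circle. The kernel integral of `g` is
`2 g w - g 0`. That of `conj g` is `conj (g 0)`, because on the circle the conjugate of the kernel
extends holomorphically to the disc and has value `1` at the origin. -/
theorem schwarz_disc {g : ℂ → ℂ} (hg : DiffContOnCl ℂ g (Metric.ball 0 1)) {w : ℂ}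
    (hw : w ∈ Metric.ball (0 : ℂ) 1) :
    Real.circleAverage (fun z => (z + w) / (z - w) * ((g z).re : ℂ)) 0 1
      = g w - I * ((g 0).im : ℂ) := by
  have hw' : ‖w‖ < 1 := by simpa using hw
  have hne : ∀ z ∈ Metric.sphere (0 : ℂ) 1, z - w ≠ 0 := by
    intro z hz h
    rw [sub_eq_zero] at h
    simp [h] at hz
    linarith
  have hne' : ∀ z ∈ Metric.closedBall (0 : ℂ) 1,
      1 - (starRingEnd ℂ) w * z ≠ 0 := by
    intro z hz h
    have hz' : ‖z‖ ≤ 1 := by simpa using hz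
    have h1 : (starRingEnd ℂ) w * z = 1 := (sub_eq_zero.1 h).symm
    have h2 : ‖w‖ * ‖z‖ = 1 := by simpa using congrArg norm h1
    nlinarith [norm_nonneg z, norm_nonneg w]
  have hgc : ContinuousOn g (Metric.sphere 0 1) :=
    hg.2.mono <| Metric.sphere_subset_closedBall.trans_eq
      (closure_ball (0 : ℂ) one_ne_zero).symm
  have hg1 : DiffContOnCl ℂ g (Metric.ball 0 |1|) := by simpa using hg
  have hw1 : w ∈ Metric.ball (0 : ℂ) |1| := by simpa using hw
  -- Cauchy's formula for `g` and the mean value property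
  have h1 : Real.circleAverage (fun z => z / (z - w) * g z) 0 1 = g w := by
    simpa using hg1.circleAverage_smul_div hw1
  have h2 : Real.circleAverage g 0 1 = g 0 := hg1.circleAverage
  -- on the circle `conj ((z + w) / (z - w))` agrees with a function holomorphic on the disc
  have h3 : Real.circleAverage
      (fun z => (1 + (starRingEnd ℂ) w * z) / (1 - (starRingEnd ℂ) w * z) * g z) 0 1 = g 0 := by
    have hd : DiffContOnCl ℂ
        (fun z => (1 + (starRingEnd ℂ) w * z) / (1 - (starRingEnd ℂ) w * z) * g z)
        (Metric.ball 0 |1|) := by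
      have hk : DiffContOnCl ℂ
          (fun z => (1 + (starRingEnd ℂ) w * z) / (1 - (starRingEnd ℂ) w * z))
          (Metric.ball 0 |1|) := by
        apply DifferentiableOn.diffContOnCl
        rw [abs_one, closure_ball (0 : ℂ) one_ne_zero]
        exact DifferentiableOn.div (by fun_prop) (by fun_prop) hne'
      exact hk.smul hg1
    simpa using hd.circleAverage
  have c1 : CircleIntegrable (fun z => z / (z - w) * g z) 0 1 := by
    apply ContinuousOn.circleIntegrable zero_le_one
    exact ((continuousOn_id).div (by fun_prop) hne).mul hgc
  have c3 : CircleIntegrable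
      (fun z => (1 + (starRingEnd ℂ) w * z) / (1 - (starRingEnd ℂ) w * z) * g z) 0 1 := by
    apply ContinuousOn.circleIntegrable zero_le_one
    exact (ContinuousOn.div (by fun_prop) (by fun_prop)
      (fun z hz => hne' z (Metric.sphere_subset_closedBall hz))).mul hgc
  have h4 : Real.circleAverage (fun z => (starRingEnd ℂ)
      ((1 + (starRingEnd ℂ) w * z) / (1 - (starRingEnd ℂ) w * z) * g z)) 0 1
        = (starRingEnd ℂ) (g 0) := by
    rw [← h3]
    exact ContinuousLinearMap.circleAverage_comp_comm (conjCLE : ℂ →L[ℝ] ℂ) c3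
  have hcc : ContinuousOn (fun z => (starRingEnd ℂ)
      ((1 + (starRingEnd ℂ) w * z) / (1 - (starRingEnd ℂ) w * z) * g z)) (Metric.sphere 0 1) := by
    refine continuous_conj.comp_continuousOn ?_
    exact (ContinuousOn.div (by fun_prop) (by fun_prop)
      (fun z hz => hne' z (Metric.sphere_subset_closedBall hz))).mul hgc
  have key : Real.circleAverage (fun z => (z + w) / (z - w) * ((g z).re : ℂ)) 0 1
      = Real.circleAverage (fun z => z / (z - w) * g z
          - ((1 / 2 : ℝ) • g z - (1 / 2 : ℝ) • (starRingEnd ℂ)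
      ((1 + (starRingEnd ℂ) w * z) / (1 - (starRingEnd ℂ) w * z) * g z))) 0 1 := by
    apply Real.circleAverage_congr_sphere
    intro z hz
    rw [abs_one] at hz
    have hz1 : z * (starRingEnd ℂ) z = 1 := by
      rw [mul_conj, normSq_eq_norm_sq]; simp at hz; simp [hz]
    have hzw := hne z hz
    have hz0 : z ≠ 0 := by rintro rfl; simp at hz1
    have hzc : (starRingEnd ℂ) z = z⁻¹ := eq_inv_of_mul_eq_one_right hz1
    have e : (starRingEnd ℂ) ((1 + (starRingEnd ℂ) w * z) / (1 - (starRingEnd ℂ) w * z) * g z)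
        = (z + w) / (z - w) * (starRingEnd ℂ) (g z) := by
      simp only [map_mul, map_div₀, map_add, map_sub, map_one, conj_conj, hzc]
      congr 1
      have : 1 - w * z⁻¹ ≠ 0 := by
        intro h; apply hzw; field_simp at h; simpa using h
      field_simp
    simp only [e, re_eq_add_conj, real_smul]
    push_cast
    field_simp
    ring
  have c5 : CircleIntegrable (fun z => (1 / 2 : ℝ) • g z) 0 1 :=
    ContinuousOn.circleIntegrable zero_le_one (hgc.const_smul (1 / 2 : ℝ))
  have c6 : CircleIntegrable (fun z => (1 / 2 : ℝ) • (starRingEnd ℂ)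
      ((1 + (starRingEnd ℂ) w * z) / (1 - (starRingEnd ℂ) w * z) * g z)) 0 1 :=
    ContinuousOn.circleIntegrable zero_le_one (hcc.const_smul (1 / 2 : ℝ))
  have c7 : CircleIntegrable (fun z => (1 / 2 : ℝ) • g z - (1 / 2 : ℝ) • (starRingEnd ℂ)
      ((1 + (starRingEnd ℂ) w * z) / (1 - (starRingEnd ℂ) w * z) * g z)) 0 1 := c5.sub c6
  rw [key, Real.circleAverage_fun_sub c1 c7, Real.circleAverage_fun_sub c5 c6, Real.circleAverage_fun_smul,
    Real.circleAverage_fun_smul, h1, h2, h4]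
  have := im_eq_sub_conj (g 0)
  rw [this]
  simp only [real_smul]
  push_cast
  field_simp

/-- Herglotz representation on the disc for functions continuous up to the boundary: the measure
is the push-forward of `(2π)⁻¹ Re g (exp (i θ)) dθ` to the circle. -/
theorem exists_measure_of_diffContOnCl {g : ℂ → ℂ}
    (hg : DiffContOnCl ℂ g (Metric.ball 0 1))
    (hre : ∀ z ∈ Metric.sphere (0 : ℂ) 1, 0 ≤ (g z).re) :
    ∃ ν : FiniteMeasure (Metric.sphere (0 : ℂ) 1), ∀ w ∈ Metric.ball (0 : ℂ) 1,
      ∫ e, ((e : ℂ) + w) / ((e : ℂ) - w) ∂(ν : Measure (Metric.sphere (0 : ℂ) 1))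
        = g w - I * ((g 0).im : ℂ) := by
  have hgc : ContinuousOn g (Metric.sphere 0 1) :=
    hg.2.mono <| Metric.sphere_subset_closedBall.trans_eq
      (closure_ball (0 : ℂ) one_ne_zero).symm
  let φ : ℝ → Metric.sphere (0 : ℂ) 1 := fun θ => ⟨circleMap 0 1 θ, by simp⟩
  have hφ : Continuous φ := (continuous_circleMap 0 1).subtype_mk _
  let h : ℝ → ℝ := fun θ => (2 * Real.pi)⁻¹ * (g (φ θ)).re
  have hcont : Continuous h := by
    refine continuous_const.mul (continuous_re.comp ?_)
    exact (continuousOn_iff_continuous_domRestrict.1 hgc).comp hφ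
  have hpos : ∀ θ, 0 ≤ h θ := fun θ => mul_nonneg (by positivity) (hre _ (φ θ).2)
  let m : Measure ℝ := (volume.restrict (Set.Ioc 0 (2 * Real.pi))).withDensity
    (fun θ => ENNReal.ofReal (h θ))
  have hm : IsFiniteMeasure m := by
    apply isFiniteMeasure_withDensity_ofReal
    exact ((hcont.intervalIntegrable 0 (2 * Real.pi)).1).2
  refine ⟨⟨m.map φ, inferInstance⟩, fun w hw => ?_⟩
  have hne : ∀ e : Metric.sphere (0 : ℂ) 1, (e : ℂ) - w ≠ 0 := by
    rintro ⟨z, hz⟩ h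
    rw [sub_eq_zero] at h
    simp at hw hz h
    rw [h] at hz
    linarith
  have hk : Continuous (fun e : Metric.sphere (0 : ℂ) 1 => ((e : ℂ) + w) / ((e : ℂ) - w)) :=
    Continuous.div (by fun_prop) (by fun_prop) hne
  rw [← schwarz_disc hg hw, FiniteMeasure.toMeasure_mk,
    integral_map hφ.measurable.aemeasurable hk.aestronglyMeasurable,
    integral_withDensity_eq_integral_toReal_smul (by fun_prop) (by simp),
    Real.circleAverage_def, intervalIntegral.integral_of_le (by positivity),
    ← integral_smul]
  congr 1
  ext θ
  rw [ENNReal.toReal_ofReal (hpos θ)]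
  simp only [h, φ, real_smul]
  push_cast
  ring

/-- **Herglotz representation on the disc.** The measure is a weak limit, along an ultrafilter, of
the measures representing the dilations `z ↦ g (r z)` as `r → 1`. -/
theorem herglotz_disc {g : ℂ → ℂ} (hg : DifferentiableOn ℂ g (Metric.ball 0 1))
    (hre : ∀ z ∈ Metric.ball (0 : ℂ) 1, 0 ≤ (g z).re) :
    ∃ ν : FiniteMeasure (Metric.sphere (0 : ℂ) 1), ∀ w ∈ Metric.ball (0 : ℂ) 1,
      ∫ e, ((e : ℂ) + w) / ((e : ℂ) - w) ∂(ν : Measure (Metric.sphere (0 : ℂ) 1))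
        = g w - I * ((g 0).im : ℂ) := by
  let r : ℕ → ℝ := fun n => 1 - 1 / ((n : ℝ) + 2)
  have hr : ∀ n, 0 ≤ r n ∧ r n < 1 := by
    intro n
    have h2 : (0 : ℝ) < (n : ℝ) + 2 := by positivity
    refine ⟨?_, ?_⟩
    · have : 1 / ((n : ℝ) + 2) ≤ 1 := by
        rw [div_le_one h2]; linarith [(Nat.cast_nonneg n : (0 : ℝ) ≤ n)]
      simp only [r]; linarith
    · have : 0 < 1 / ((n : ℝ) + 2) := by positivity
      simp only [r]; linarith
  have hrlim : Filter.Tendsto r Filter.atTop (nhds 1) := by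
    have : Filter.Tendsto (fun n : ℕ => 1 / ((n : ℝ) + 2)) Filter.atTop (nhds 0) := by
      simp only [one_div]
      exact (Filter.tendsto_atTop_add_const_right _ 2 tendsto_natCast_atTop_atTop).inv_tendsto_atTop
    simpa [r] using this.const_sub 1
  have hmem : ∀ n, ∀ z ∈ Metric.closedBall (0 : ℂ) 1, (r n : ℂ) * z ∈ Metric.ball (0 : ℂ) 1 := by
    intro n z hz
    have hz' : ‖z‖ ≤ 1 := by simpa using hz
    have := hr n
    simp only [mem_ball_zero_iff, norm_mul, norm_real, Real.norm_eq_abs, abs_of_nonneg this.1]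
    nlinarith [norm_nonneg z]
  have H : ∀ n, ∃ ν : FiniteMeasure (Metric.sphere (0 : ℂ) 1), ∀ w ∈ Metric.ball (0 : ℂ) 1,
      ∫ e, ((e : ℂ) + w) / ((e : ℂ) - w) ∂(ν : Measure (Metric.sphere (0 : ℂ) 1))
        = g (r n * w) - I * ((g 0).im : ℂ) := by
    intro n
    have := exists_measure_of_diffContOnCl (g := fun z => g (r n * z)) ?_ ?_
    · simpa using this
    · apply DifferentiableOn.diffContOnCl
      rw [closure_ball (0 : ℂ) one_ne_zero]
      exact hg.comp (by fun_prop) (hmem n)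
    · exact fun z hz => hre _ (hmem n z (Metric.sphere_subset_closedBall hz))
  choose ν hν using H
  -- evaluating at the origin shows that all the measures have total mass `Re g 0`
  have hmass : ∀ n, ν n ∈ {μ : FiniteMeasure (Metric.sphere (0 : ℂ) 1) |
      μ.mass ≤ (g 0).re.toNNReal} := by
    intro n
    have h0 := hν n 0 (by simp)
    have h1 : ∫ e, ((e : ℂ) + 0) / ((e : ℂ) - 0) ∂(ν n : Measure (Metric.sphere (0 : ℂ) 1))
        = ((ν n).mass : ℂ) := by
      have : ∀ e : Metric.sphere (0 : ℂ) 1, ((e : ℂ) + 0) / ((e : ℂ) - 0) = 1 := by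
        intro e
        have : (e : ℂ) ≠ 0 := ne_zero_of_mem_unit_sphere e
        rw [add_zero, sub_zero, div_self this]
      rw [integral_congr_ae (Filter.Eventually.of_forall this), integral_const]
      rw [real_smul, mul_one]
      rfl
    rw [h1] at h0
    have h2 := congrArg re h0
    have h3 : ((ν n).mass : ℝ) = (g 0).re := by simpa using h2
    rw [Set.mem_ofPred_eq, ← h3, Real.toNNReal_coe]
  obtain ⟨ν', -, hlim⟩ := (isCompact_setOfPred_finiteMeasure_le_of_compactSpace
    (Metric.sphere (0 : ℂ) 1) (g 0).re.toNNReal).ultrafilter_le_nhds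
      ((Filter.hyperfilter ℕ).map ν) (by
        rw [Filter.le_principal_iff]
        exact Filter.mem_map.2 (Filter.Eventually.of_forall hmass))
  have hlim' : Filter.Tendsto ν (Filter.hyperfilter ℕ) (nhds ν') := hlim
  rw [FiniteMeasure.tendsto_iff_forall_integral_rclike_tendsto ℂ] at hlim'
  have hle : (Filter.hyperfilter ℕ : Filter ℕ) ≤ Filter.atTop := by
    rw [← Nat.cofinite_eq_atTop]; exact Filter.hyperfilter_le_cofinite
  refine ⟨ν', fun w hw => ?_⟩
  have hne : ∀ e : Metric.sphere (0 : ℂ) 1, (e : ℂ) - w ≠ 0 := by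
    rintro ⟨z, hz⟩ h
    rw [sub_eq_zero] at h
    simp at hw hz h
    rw [h] at hz
    linarith
  have hk : Continuous (fun e : Metric.sphere (0 : ℂ) 1 => ((e : ℂ) + w) / ((e : ℂ) - w)) :=
    Continuous.div (by fun_prop) (by fun_prop) hne
  have t1 := hlim' (BoundedContinuousFunction.mkOfCompact ⟨_, hk⟩)
  simp only [BoundedContinuousFunction.mkOfCompact_apply, ContinuousMap.coe_mk, hν _ w hw] at t1
  have t2 : Filter.Tendsto (fun n => g (r n * w) - I * ((g 0).im : ℂ)) Filter.atTop
      (nhds (g w - I * ((g 0).im : ℂ))) := by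
    have hgw : ContinuousAt g w :=
      (hg.differentiableAt (Metric.isOpen_ball.mem_nhds hw)).continuousAt
    have h1 : Filter.Tendsto (fun n => (r n : ℂ) * w) Filter.atTop (nhds w) := by
      have := ((continuous_ofReal.tendsto (1 : ℝ)).comp hrlim).mul_const w
      simpa using this
    exact (hgw.tendsto.comp h1).sub_const _
  exact tendsto_nhds_unique t1 (t2.mono_left hle)

theorem cayley_mem_upper {w : ℂ} (hw : w ∈ Metric.ball (0 : ℂ) 1) :
    0 < (I * (1 + w) / (1 - w)).im := by
  have hw' : ‖w‖ < 1 := by simpa using hw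
  have h1 : 1 - w ≠ 0 := by
    intro h
    rw [← sub_eq_zero.1 h] at hw'
    simp at hw'
  have h2 : w.re * w.re + w.im * w.im < 1 := by
    rw [← normSq_apply, normSq_eq_norm_sq]
    nlinarith [norm_nonneg w]
  have h3 : 0 < normSq (1 - w) := normSq_pos.2 h1
  have : (I * (1 + w) / (1 - w)).im
      = (1 - (w.re * w.re + w.im * w.im)) / normSq (1 - w) := by
    rw [div_im]
    simp
    ring
  rw [this]
  exact div_pos (by linarith) h3

theorem cayley_symm_mem_ball {ζ : ℂ} (hζ : 0 < ζ.im) :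
    (ζ - I) / (ζ + I) ∈ Metric.ball (0 : ℂ) 1 := by
  have h1 : ζ + I ≠ 0 := by
    intro h
    have := congrArg im h
    simp at this
    linarith
  rw [mem_ball_zero_iff, norm_div, div_lt_one (norm_pos_iff.2 h1), ← sq_lt_sq₀ (norm_nonneg _)
    (norm_nonneg _), ← normSq_eq_norm_sq, ← normSq_eq_norm_sq, normSq_apply, normSq_apply]
  simp
  nlinarith

/-- The Cayley transform `e ↦ i (1 + e) / (1 - e)` from the unit circle to the real line. At the
point `1`, which corresponds to infinity, it takes the junk value `0`. -/
noncomputable def cayleyReal (e : Metric.sphere (0 : ℂ) 1) : ℝ :=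
  (I * (1 + (e : ℂ)) / (1 - (e : ℂ))).re

theorem measurable_cayleyReal : Measurable cayleyReal := by
  unfold cayleyReal
  fun_prop

theorem ofReal_cayleyReal (e : Metric.sphere (0 : ℂ) 1) :
    (cayleyReal e : ℂ) = I * (1 + (e : ℂ)) / (1 - (e : ℂ)) := by
  obtain ⟨z, hz⟩ := e
  have hz' : ‖z‖ = 1 := by simpa using hz
  have h2 : z.re * z.re + z.im * z.im = 1 := by
    rw [← normSq_apply, normSq_eq_norm_sq, hz', one_pow]
  apply Complex.ext
  · simp [cayleyReal]
  · rw [div_im, ofReal_im]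
    simp
    rw [← sub_div, eq_comm, div_eq_zero_iff]
    left
    linear_combination -h2

/-- The Herglotz kernel of the disc in the half-plane coordinates `t`, `ζ`. -/
theorem I_mul_kernel {ζ : ℂ} (hζ : 0 < ζ.im) (e : Metric.sphere (0 : ℂ) 1) (he : (e : ℂ) ≠ 1) :
    I * (((e : ℂ) + (ζ - I) / (ζ + I)) / ((e : ℂ) - (ζ - I) / (ζ + I)))
      = (1 + cayleyReal e * ζ) / (cayleyReal e - ζ) := by
  have h1 : ζ + I ≠ 0 := by
    intro h
    have := congrArg im h
    simp at this
    linarith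
  have h2 : 1 - (e : ℂ) ≠ 0 := sub_ne_zero.2 he.symm
  have h3 : (cayleyReal e : ℂ) - ζ ≠ 0 := by
    intro h
    have := congrArg im h
    simp at this
    linarith
  have h4 : (e : ℂ) - (ζ - I) / (ζ + I) ≠ 0 := by
    intro h
    have h5 := cayley_symm_mem_ball hζ
    rw [← sub_eq_zero.1 h] at h5
    simp at h5
  rw [mul_div_assoc', div_eq_div_iff h4 h3, ofReal_cayleyReal]
  field_simp
  linear_combination (-I + I * (e : ℂ) ^ 2 - 2 * e * ζ + e ^ 2 * ζ + ζ) * I_sq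

/-- Riesz–Herglotz (Nevanlinna) representation: a holomorphic function on the upper
half plane with nonnegative imaginary part is given by `a ζ + b` plus a Poisson-type
integral against a positive Borel measure `μ` with `∫ dμ(t)/(1+t²) < ∞`. -/
theorem herglotz_representation (F : ℂ → ℂ)
    (hF : DifferentiableOn ℂ F {ζ : ℂ | 0 < ζ.im})
    (hIm : ∀ ζ : ℂ, 0 < ζ.im → 0 ≤ (F ζ).im) :
    ∃ (a b : ℝ) (μ : Measure ℝ), 0 ≤ a ∧
      Integrable (fun t : ℝ => 1 / (1 + t ^ 2)) μ ∧
      ∀ ζ : ℂ, 0 < ζ.im →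
        F ζ = a * ζ + b +
          (1 / (Real.pi : ℂ)) *
            ∫ t : ℝ, (-(1 / (ζ - t)) - (t : ℂ) / (1 + (t : ℂ) ^ 2)) ∂μ := by
  set G : ℂ → ℂ := fun w => -I * F (I * (1 + w) / (1 - w)) with hG
  have hGd : DifferentiableOn ℂ G (Metric.ball 0 1) := by
    refine (hF.comp (f := fun w : ℂ => I * (1 + w) / (1 - w)) ?_
      (fun w hw => cayley_mem_upper hw)).const_mul (-I)
    refine DifferentiableOn.div (by fun_prop) (by fun_prop) ?_
    intro w hw h
    rw [← sub_eq_zero.1 h] at hw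
    simp at hw
  have hGre : ∀ z ∈ Metric.ball (0 : ℂ) 1, 0 ≤ (G z).re := by
    intro z hz
    simpa [hG] using hIm _ (cayley_mem_upper hz)
  obtain ⟨ν, hν⟩ := herglotz_disc hGd hGre
  set p : Metric.sphere (0 : ℂ) 1 := ⟨1, by simp⟩ with hp
  set m : Measure (Metric.sphere (0 : ℂ) 1) := (ν : Measure (Metric.sphere (0 : ℂ) 1))
    with hm
  have hdm : Measurable fun t : ℝ => ENNReal.ofReal (Real.pi * (1 + t ^ 2)) := by fun_prop
  have hd0 : ∀ t : ℝ, 0 ≤ Real.pi * (1 + t ^ 2) := fun t => by positivity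
  refine ⟨m.real {p}, (F I).re, ((m.restrict {p}ᶜ).map cayleyReal).withDensity
    (fun t => ENNReal.ofReal (Real.pi * (1 + t ^ 2))), measureReal_nonneg, ?_, ?_⟩
  · rw [integrable_withDensity_iff_integrable_smul' hdm (by simp)]
    refine (integrable_const Real.pi).congr (Filter.Eventually.of_forall fun t => ?_)
    have : 1 + t ^ 2 ≠ 0 := by positivity
    simp only [ENNReal.toReal_ofReal (hd0 t), smul_eq_mul]
    field_simp
  · intro ζ hζ
    have hwb := cayley_symm_mem_ball hζ
    have h1 : ζ + I ≠ 0 := by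
      intro h
      have := congrArg im h
      simp at this
      linarith
    have hGw : G ((ζ - I) / (ζ + I)) = -I * F ζ := by
      have : I * (1 + (ζ - I) / (ζ + I)) / (1 - (ζ - I) / (ζ + I)) = ζ := by
        have h2 : 1 - (ζ - I) / (ζ + I) = 2 * I / (ζ + I) := by field_simp; ring
        have h3 : 1 + (ζ - I) / (ζ + I) = 2 * ζ / (ζ + I) := by field_simp; ring
        rw [h2, h3]
        field_simp [I_ne_zero]
      simp only [hG, this]
    have hG0 : (G 0).im = -(F I).re := by simp [hG]
    have hrep := hν _ hwb
    rw [hGw, hG0] at hrep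
    have hne : ∀ e : Metric.sphere (0 : ℂ) 1, (e : ℂ) - (ζ - I) / (ζ + I) ≠ 0 := by
      intro e h
      have h5 := hwb
      rw [← sub_eq_zero.1 h] at h5
      simp at h5
    have hk : Continuous (fun e : Metric.sphere (0 : ℂ) 1 =>
        ((e : ℂ) + (ζ - I) / (ζ + I)) / ((e : ℂ) - (ζ - I) / (ζ + I))) :=
      Continuous.div (by fun_prop) (by fun_prop) hne
    have hki : Integrable (fun e : Metric.sphere (0 : ℂ) 1 =>
        ((e : ℂ) + (ζ - I) / (ζ + I)) / ((e : ℂ) - (ζ - I) / (ζ + I))) m :=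
      (BoundedContinuousFunction.mkOfCompact ⟨_, hk⟩).integrable m
    -- the point `1` of the circle contributes the linear term
    have hpt : I * ((1 + (ζ - I) / (ζ + I)) / (1 - (ζ - I) / (ζ + I))) = ζ := by
      have h2 : 1 - (ζ - I) / (ζ + I) = 2 * I / (ζ + I) := by field_simp; ring
      have h3 : 1 + (ζ - I) / (ζ + I) = 2 * ζ / (ζ + I) := by field_simp; ring
      rw [h2, h3]
      field_simp [I_ne_zero]
    have hF' : F ζ = (F I).re + I * ∫ e : Metric.sphere (0 : ℂ) 1,
        ((e : ℂ) + (ζ - I) / (ζ + I)) / ((e : ℂ) - (ζ - I) / (ζ + I)) ∂m := by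
      rw [hrep]
      push_cast
      linear_combination (F ζ - (F I).re) * I_sq
    have hrest : I * ∫ e in {p}ᶜ,
        ((e : ℂ) + (ζ - I) / (ζ + I)) / ((e : ℂ) - (ζ - I) / (ζ + I)) ∂m
        = ∫ e in {p}ᶜ, (1 + cayleyReal e * ζ) / (cayleyReal e - ζ) ∂m := by
      rw [← integral_const_mul]
      refine setIntegral_congr_fun (measurableSet_singleton p).compl fun e he => ?_
      exact I_mul_kernel hζ e (fun h => he (Subtype.ext h))
    rw [hF', ← integral_add_compl (measurableSet_singleton p) hki, mul_add, hrest,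
      integral_singleton, integral_withDensity_eq_integral_toReal_smul hdm (by simp),
      integral_map measurable_cayleyReal.aemeasurable
        (Measurable.aestronglyMeasurable (by fun_prop)), ← integral_const_mul]
    have hint : ∀ t : ℝ, (1 + t * ζ) / (t - ζ) = 1 / (Real.pi : ℂ) *
        ((ENNReal.ofReal (Real.pi * (1 + t ^ 2))).toReal •
          (-(1 / (ζ - t)) - (t : ℂ) / (1 + (t : ℂ) ^ 2))) := by
      intro t
      have e1 : (t : ℂ) - ζ ≠ 0 := by
        intro h
        have := congrArg im h
        simp at this
        linarith
      have e2 : 1 + (t : ℂ) ^ 2 ≠ 0 := by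
        have : (1 + t ^ 2 : ℝ) ≠ 0 := by positivity
        exact_mod_cast this
      have e3 : (Real.pi : ℂ) ≠ 0 := by exact_mod_cast Real.pi_ne_zero
      have e4 : ζ - (t : ℂ) = -((t : ℂ) - ζ) := by ring
      rw [ENNReal.toReal_ofReal (hd0 t), real_smul, e4]
      push_cast
      field_simp
      ring
    simp only [hint, real_smul]
    rw [mul_left_comm, hp]
    simp only [hpt]
    ring
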